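/- Let L, M ≥ 1 and N = L·M. Let x : Fin N → ℂ with discrete Fourier transform X(k) = Σ_{j=0}^{N-1} x(j)·exp(−2πi·j·k/N), and suppose X(k + l·M) = 0 for all k ∈ {0,…,M−1} and all l ∈ {1,…,L−1} (the spectrum vanishes at and above the Nyquist frequency of the lower sampling rate). Then the DFT Y(k) = Σ_{m=0}^{M-1} x(m·L)·exp(−2πi·m·k/M) of the L-fold downsampled signal satisfies Y(k) = (1/L)·X(k) for all k ∈ {0,…,M−1}; that is, downsampling introduces no aliasing and preserves the spectrum up to the factor 1/L. -/

import Mathlib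

/-!
Summing the `L` values of the spectrum at the frequencies `k + l * M` multiplies the term
`ζ ^ (j * k) • x j` by `∑ l, ζ ^ (j * l * M)`, a geometric sum over powers of a primitive `L`-th
root of unity: it equals `L` when `L ∣ j` and vanishes otherwise. Hence the sum of these values is
`L` times the spectrum of the downsampled signal at `k`, and under the vanishing hypothesis only
the value for `l = 0` survives.
-/

open Finset

variable {K E : Type*} {L M N : ℕ}

/-- The discrete Fourier transform of a signal of length `N` with respect to a root of unity `ζ`,
as a function of the integer frequency `k`. The usual transform is the case
`ζ = exp (-2 * π * I / N)`, see `dft_dftRoot`. -/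
def dft [Field K] [AddCommMonoid E] [Module K E] (ζ : K) (x : Fin N → E) (k : ℤ) : E :=
  ∑ j : Fin N, ζ ^ ((j : ℤ) * k) • x j

/-- The `L`-fold downsampling of a signal of length `L * M`, keeping every `L`-th sample. -/
def downsample [NeZero L] (x : Fin (L * M) → E) (m : Fin M) : E :=
  x ⟨m * L, mul_comm L M ▸ Nat.mul_lt_mul_of_pos_right m.isLt (NeZero.pos L)⟩

theorem sum_ite_dvd_eq_sum_downsample [NeZero L] [AddCommMonoid E] (f : Fin (L * M) → E) :
    ∑ j : Fin (L * M), (if L ∣ (j : ℕ) then f j else 0) = ∑ m : Fin M, downsample f m := by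
  have hL : 0 < L := NeZero.pos L
  symm
  refine Fintype.sum_of_injective (downsample id)
    (fun a b hab ↦ Fin.ext (Nat.eq_of_mul_eq_mul_right hL (Fin.mk.inj_iff.1 hab))) _ _ ?_ ?_
  · intro j hj
    refine if_neg ?_
    rintro ⟨m, hm⟩
    have hmM : m < M := Nat.lt_of_mul_lt_mul_left (hm ▸ j.isLt)
    exact hj ⟨⟨m, hmM⟩, Fin.ext (by simp [downsample, hm, mul_comm])⟩
  · intro m
    exact (if_pos (Dvd.intro_left _ rfl)).symm

theorem geom_sum_pow_of_isPrimitiveRoot {R : Type*} [CommRing R] [IsDomain R] {ω : R}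
    (hω : IsPrimitiveRoot ω L) (j : ℕ) :
    ∑ l ∈ range L, (ω ^ j) ^ l = if L ∣ j then (L : R) else 0 := by
  split_ifs with hj
  · simp [(hω.pow_eq_one_iff_dvd j).2 hj]
  · have hne : ω ^ j - 1 ≠ 0 := sub_ne_zero.2 (mt (hω.pow_eq_one_iff_dvd j).1 hj)
    have hpow : (ω ^ j) ^ L = 1 := by rw [pow_right_comm, hω.pow_eq_one, one_pow]
    refine (mul_eq_zero.1 ?_).resolve_right hne
    rw [geom_sum_mul, hpow, sub_self]

section Aliasing

variable [Field K] [AddCommMonoid E] [Module K E] [NeZero L] [NeZero M] {ζ : K}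

theorem sum_zpow_mul_add_mul (hζ : IsPrimitiveRoot ζ (L * M)) (j : ℕ) (k : ℤ) :
    ∑ l ∈ range L, ζ ^ ((j : ℤ) * (k + l * M)) =
      if L ∣ j then (L : K) * ζ ^ ((j : ℤ) * k) else 0 := by
  have hζ0 : ζ ≠ 0 := hζ.ne_zero (NeZero.ne _)
  have hω : IsPrimitiveRoot (ζ ^ M) L := hζ.pow (NeZero.pos _) (mul_comm L M)
  calc ∑ l ∈ range L, ζ ^ ((j : ℤ) * (k + l * M))
      = ∑ l ∈ range L, ((ζ ^ M) ^ j) ^ l * ζ ^ ((j : ℤ) * k) := by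
        refine sum_congr rfl fun l _ ↦ ?_
        rw [← pow_mul, ← pow_mul, ← zpow_natCast, ← zpow_add₀ hζ0]
        congr 1
        push_cast
        ring
    _ = if L ∣ j then (L : K) * ζ ^ ((j : ℤ) * k) else 0 := by
        rw [← sum_mul, geom_sum_pow_of_isPrimitiveRoot hω, ite_mul, zero_mul]

theorem sum_dft_add_mul_eq_smul_dft_downsample (hζ : IsPrimitiveRoot ζ (L * M))
    (x : Fin (L * M) → E) (k : ℤ) :
    ∑ l ∈ range L, dft ζ x (k + l * M) = (L : K) • dft (ζ ^ L) (downsample x) k := by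
  calc ∑ l ∈ range L, dft ζ x (k + l * M)
      = ∑ j : Fin (L * M), (∑ l ∈ range L, ζ ^ ((j : ℤ) * (k + l * M))) • x j := by
        simp only [dft, sum_smul]
        exact sum_comm
    _ = ∑ j : Fin (L * M), if L ∣ (j : ℕ) then ((L : K) * ζ ^ ((j : ℤ) * k)) • x j else 0 := by
        simp only [sum_zpow_mul_add_mul hζ, ite_smul, zero_smul]
    _ = ∑ m : Fin M, (L : K) • (ζ ^ L) ^ ((m : ℤ) * k) • downsample x m := by
        rw [sum_ite_dvd_eq_sum_downsample]
        refine sum_congr rfl fun m _ ↦ ?_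
        simp only [downsample, mul_smul]
        rw [← zpow_natCast, ← zpow_mul]
        congr 3
        push_cast
        ring
    _ = (L : K) • dft (ζ ^ L) (downsample x) k := smul_sum.symm

theorem dft_downsample_no_alias_general (hζ : IsPrimitiveRoot ζ (L * M)) (x : Fin (L * M) → E)
    (k : ℤ) (hzero : ∀ l : ℕ, 1 ≤ l → l < L → dft ζ x (k + l * M) = 0) :
    dft (ζ ^ L) (downsample x) k = (1 / (L : K)) • dft ζ x k := by
  have hL : (L : K) ≠ 0 :=
    (hζ.pow (NeZero.pos _) (mul_comm L M)).neZero'.out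
  have hsum : ∑ l ∈ range L, dft ζ x (k + l * M) = dft ζ x k := by
    rw [sum_eq_single_of_mem 0 (mem_range.2 (NeZero.pos L)) fun l hl hl0 ↦
      hzero l (Nat.one_le_iff_ne_zero.2 hl0) (mem_range.1 hl)]
    simp
  rw [← hsum, sum_dft_add_mul_eq_smul_dft_downsample hζ, one_div, inv_smul_smul₀ hL]

end Aliasing

/-- The primitive `N`-th root of unity `exp (-2 * π * I / N)` defining the usual discrete Fourier
transform; the junk value at `N = 0` is `1`. -/
noncomputable def dftRoot (N : ℕ) : ℂ :=
  Complex.exp (-(2 * Real.pi * Complex.I / N))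

theorem isPrimitiveRoot_dftRoot [NeZero N] : IsPrimitiveRoot (dftRoot N) N := by
  rw [dftRoot, Complex.exp_neg]
  exact (Complex.isPrimitiveRoot_exp N (NeZero.ne N)).inv

theorem dftRoot_mul_pow [NeZero L] : dftRoot (L * M) ^ L = dftRoot M := by
  have hL : (L : ℂ) ≠ 0 := NeZero.ne _
  rw [dftRoot, dftRoot, ← Complex.exp_nat_mul, Nat.cast_mul, mul_neg, mul_div_assoc',
    mul_div_mul_left _ _ hL]

theorem dft_dftRoot (x : Fin N → ℂ) (k : ℤ) :
    dft (dftRoot N) x k = ∑ j : Fin N, x j *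
      Complex.exp (-2 * (Real.pi : ℂ) * Complex.I * ((j : ℕ) : ℂ) * (k : ℂ) / (N : ℂ)) := by
  refine sum_congr rfl fun j _ ↦ ?_
  rw [dftRoot, ← Complex.exp_int_mul, smul_eq_mul, mul_comm]
  congr 2
  push_cast
  ring

/-- **Alias-free downsampling.**
Let `N = L * M` and let `X` be the `N`-point DFT of `x : Fin N → ℂ`.
If the spectrum vanishes at and above the Nyquist frequency of the lower
sampling rate, i.e. `X (k + l * M) = 0` for all `k ∈ {0,…,M-1}` and all
`l ∈ {1,…,L-1}`, then the `M`-point DFT `Y` of the `L`-fold downsampled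
signal satisfies `Y k = (1/L) * X k` for all `k ∈ {0,…,M-1}`. -/
theorem dft_downsample_no_alias
    (L M : ℕ) (hL : 1 ≤ L) (hM : 1 ≤ M) (N : ℕ) (hN : N = L * M)
    (x : Fin N → ℂ) (X Y : ℤ → ℂ)
    (hX : ∀ k : ℤ, X k =
      ∑ j : Fin N, x j *
        Complex.exp (-2 * (Real.pi : ℂ) * Complex.I * ((j : ℕ) : ℂ) * (k : ℂ) / (N : ℂ)))
    (hY : ∀ k : ℤ, Y k =
      ∑ m : Fin M, x ⟨(m : ℕ) * L, by nlinarith [m.isLt, hL, hN]⟩ *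
        Complex.exp (-2 * (Real.pi : ℂ) * Complex.I * ((m : ℕ) : ℂ) * (k : ℂ) / (M : ℂ)))
    (hzero : ∀ k : ℕ, k < M → ∀ l : ℕ, 1 ≤ l → l < L →
      X ((k : ℤ) + (l : ℤ) * (M : ℤ)) = 0) :
    ∀ k : ℕ, k < M → Y (k : ℤ) = (1 / (L : ℂ)) * X (k : ℤ) := by
  intro k hk
  subst hN
  have : NeZero L := ⟨Nat.one_le_iff_ne_zero.1 hL⟩
  have : NeZero M := ⟨Nat.one_le_iff_ne_zero.1 hM⟩
  obtain rfl : X = dft (dftRoot (L * M)) x := funext fun k ↦ (hX k).trans (dft_dftRoot x k).symm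
  obtain rfl : Y = dft (dftRoot (L * M) ^ L) (downsample x) :=
    funext fun k ↦ (hY k).trans (dftRoot_mul_pow (L := L) ▸ dft_dftRoot (downsample x) k).symm
  exact dft_downsample_no_alias_general isPrimitiveRoot_dftRoot x k (hzero k hk)
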